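/- arXiv:1911.01494 — 4 statements merged into one kernel-verified Lean document; each statement's English description precedes it below -/
import Mathlib

section
/- Let d be an odd prime, r a primitive root modulo d, and define the matrices A₁, A₂, A₃, A₄, O, U as in the context. Let ψ̃ = (1/√(d−1)) Σ_{j=1}^{d−1} x_j ⊗ x_{d−j} ∈ ℂ^{d−1} ⊗ ℂ^{d−1}. Then (A_i ⊗ A_i) ψ̃ = ψ̃ for each i = 1, 2, 3, 4; consequently (O ⊗ O) ψ̃ = ψ̃ and (U ⊗ U) ψ̃ = ψ̃. -/
open Matrix Kronecker

/-- The nonzero residues modulo `d`, indexing the rows/columns of our matrices. -/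
abbrev NzRes (d : ℕ) := {x : ZMod d // x ≠ 0}

/-- `ω = exp(2πi/d)`. -/
noncomputable def omC (d : ℕ) : ℂ := Complex.exp (2 * Real.pi * Complex.I / d)

/-- `η = exp(2πi/(d-1))`. -/
noncomputable def etC (d : ℕ) : ℂ := Complex.exp (2 * Real.pi * Complex.I / ((d : ℂ) - 1))

/-- The standard basis index `x_j` for `j : ℕ` (junk value if `j ≡ 0 mod d`). -/
noncomputable def xv (d : ℕ) [Fact (1 < d)] (j : ℕ) : NzRes d :=
  if h : (j : ZMod d) ≠ 0 then ⟨(j : ZMod d), h⟩ else ⟨1, one_ne_zero⟩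

/-- The vector `u_k = (1/√(d-1)) ∑_{j=0}^{d-2} η^{jk} x_{r^j mod d}`. -/
noncomputable def uvec (d r : ℕ) [Fact (1 < d)] (k : ℕ) : NzRes d → ℂ :=
  fun x => (Real.sqrt ((d : ℝ) - 1) : ℂ)⁻¹ *
    ∑ j ∈ Finset.range (d - 1), etC d ^ (j * k) * (Pi.single (xv d (r ^ j)) (1 : ℂ) : NzRes d → ℂ) x

/-- `A₁ = ∑_{j=1}^{(d-1)/2} (ω^j |x_j⟩⟨x_{d-j}| + ω^{-j} |x_{d-j}⟩⟨x_j|)`. -/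
noncomputable def A1 (d : ℕ) [Fact (1 < d)] : Matrix (NzRes d) (NzRes d) ℂ :=
  ∑ j ∈ Finset.Icc 1 ((d - 1) / 2),
    (omC d ^ j • Matrix.single (xv d j) (xv d (d - j)) (1 : ℂ) +
      (omC d)⁻¹ ^ j • Matrix.single (xv d (d - j)) (xv d j) (1 : ℂ))

/-- `A₂ = ∑_{j=1}^{d-1} |x_j⟩⟨x_{d-j}|`. -/
noncomputable def A2 (d : ℕ) [Fact (1 < d)] : Matrix (NzRes d) (NzRes d) ℂ :=
  ∑ j ∈ Finset.Icc 1 (d - 1), Matrix.single (xv d j) (xv d (d - j)) (1 : ℂ)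

/-- `A₃ = |u₀⟩⟨u₀| + η^{(d-1)/2}|u_{(d-1)/2}⟩⟨u_{(d-1)/2}|
    + ∑_{k=1}^{(d-3)/2} (η^k |u_k⟩⟨u_{d-1-k}| + η^{-k} |u_{d-1-k}⟩⟨u_k|)`. -/
noncomputable def A3 (d r : ℕ) [Fact (1 < d)] : Matrix (NzRes d) (NzRes d) ℂ :=
  Matrix.vecMulVec (uvec d r 0) (star (uvec d r 0)) +
  etC d ^ ((d - 1) / 2) •
    Matrix.vecMulVec (uvec d r ((d - 1) / 2)) (star (uvec d r ((d - 1) / 2))) +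
  ∑ k ∈ Finset.Icc 1 ((d - 3) / 2),
    (etC d ^ k • Matrix.vecMulVec (uvec d r k) (star (uvec d r (d - 1 - k))) +
      (etC d)⁻¹ ^ k • Matrix.vecMulVec (uvec d r (d - 1 - k)) (star (uvec d r k)))

/-- `A₄ = |u₀⟩⟨u₀| + |u_{(d-1)/2}⟩⟨u_{(d-1)/2}|
    + ∑_{k=1}^{(d-3)/2} (|u_{d-1-k}⟩⟨u_k| + |u_k⟩⟨u_{d-1-k}|)`. -/
noncomputable def A4 (d r : ℕ) [Fact (1 < d)] : Matrix (NzRes d) (NzRes d) ℂ :=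
  Matrix.vecMulVec (uvec d r 0) (star (uvec d r 0)) +
  Matrix.vecMulVec (uvec d r ((d - 1) / 2)) (star (uvec d r ((d - 1) / 2))) +
  ∑ k ∈ Finset.Icc 1 ((d - 3) / 2),
    (Matrix.vecMulVec (uvec d r (d - 1 - k)) (star (uvec d r k)) +
      Matrix.vecMulVec (uvec d r k) (star (uvec d r (d - 1 - k))))

/-- The diagonal matrix `O x_k = ω^k x_k`. -/
noncomputable def Omat (d : ℕ) : Matrix (NzRes d) (NzRes d) ℂ :=
  Matrix.diagonal fun k : NzRes d => omC d ^ (k.1).val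

/-- The permutation matrix `U x_k = x_{k·r⁻¹ mod d}`. -/
noncomputable def Umat (d r : ℕ) : Matrix (NzRes d) (NzRes d) ℂ :=
  Matrix.of fun i k : NzRes d =>
    if (i : ZMod d) = (k : ZMod d) * (r : ZMod d)⁻¹ then (1 : ℂ) else 0

/-- `ψ̃ = (1/√(d-1)) ∑_{j=1}^{d-1} x_j ⊗ x_{d-j}`, as a vector on the product index type. -/
noncomputable def psiT (d : ℕ) [Fact (1 < d)] : NzRes d × NzRes d → ℂ :=
  fun p => (Real.sqrt ((d : ℝ) - 1) : ℂ)⁻¹ *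
    ∑ j ∈ Finset.Icc 1 (d - 1),
      (Pi.single (xv d j) (1 : ℂ) : NzRes d → ℂ) p.1 *
        (Pi.single (xv d (d - j)) (1 : ℂ) : NzRes d → ℂ) p.2

/-!
Let `N` be the permutation matrix of `x ↦ -x` on the nonzero residues. Then `ψ̃` is a multiple of
`vec N`, and `(A ⊗ A) vec N = vec (A N Aᵀ)`. So `ψ̃` is fixed by `A ⊗ A` when `A` is the matrix of a
permutation commuting with negation, or a diagonal matrix with `A_{xx} A_{-x,-x} = 1`, and the
matrices `A` with this property are closed under products.

The first kind covers `A₂ = N`, `U` and, by orthogonality of the characters `u_k`, the matrix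
`A₄ = ∑ u_k u_kᵀ` of `x ↦ x⁻¹`; the second kind covers `O`. Finally `A₁ = O A₂`, and `A₃ = U A₄`
because `U u_k = η^k u_k`.
-/

section Sums

variable {M : Type*} [AddCommMonoid M]

theorem sum_Icc_add_reflect (f : ℕ → M) {m n : ℕ} (hmn : m ≤ n) :
    ∑ k ∈ Finset.Icc 1 m, (f k + f (n - k)) =
      ∑ k ∈ Finset.Ico 1 (m + 1), f k + ∑ k ∈ Finset.Ico (n - m) n, f k := by
  rw [← Finset.Ico_add_one_right_eq_Icc, Finset.sum_add_distrib,
    Finset.sum_Ico_reflect f 1 (by omega : m + 1 ≤ n + 1), Nat.add_sub_add_right,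
    Nat.add_sub_cancel]

theorem sum_Icc_add_reflect_of_odd (f : ℕ → M) {n : ℕ} (hn : Odd n) :
    ∑ k ∈ Finset.Icc 1 ((n - 1) / 2), (f k + f (n - k)) = ∑ k ∈ Finset.Icc 1 (n - 1), f k := by
  obtain ⟨m, rfl⟩ := hn
  have half : (2 * m + 1 - 1) / 2 = m := by omega
  have sub_half : 2 * m + 1 - m = m + 1 := by omega
  rw [half, sum_Icc_add_reflect f (by omega), sub_half, Nat.add_sub_cancel,
    Finset.sum_Ico_consecutive f (by omega) (by omega), Finset.Ico_add_one_right_eq_Icc]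

theorem add_add_sum_Icc_add_reflect_of_even (f : ℕ → M) {n : ℕ} (hn : Even n) (hn₀ : n ≠ 0) :
    f 0 + f (n / 2) + ∑ k ∈ Finset.Icc 1 ((n - 2) / 2), (f k + f (n - k)) =
      ∑ k ∈ Finset.range n, f k := by
  obtain ⟨m, rfl⟩ : ∃ m, n = 2 * m + 2 := by
    obtain ⟨l, rfl⟩ := hn
    exact ⟨l - 1, by omega⟩
  have half_sub : (2 * m + 2 - 2) / 2 = m := by omega
  have half : (2 * m + 2) / 2 = m + 1 := by omega
  have sub_half : 2 * m + 2 - m = m + 2 := by omega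
  have split : ∑ k ∈ Finset.range (2 * m + 2), f k = f 0 + ∑ k ∈ Finset.Ico 1 (m + 1), f k +
      (f (m + 1) + ∑ k ∈ Finset.Ico (m + 2) (2 * m + 2), f k) := by
    rw [Finset.range_eq_Ico, Finset.sum_eq_sum_Ico_succ_bot (by omega : 0 < 2 * m + 2), zero_add,
      ← Finset.sum_Ico_consecutive f (by omega : 1 ≤ m + 1) (by omega : m + 1 ≤ 2 * m + 2),
      Finset.sum_eq_sum_Ico_succ_bot (by omega : m + 1 < 2 * m + 2), ← add_assoc]
  rw [half_sub, half, sum_Icc_add_reflect f (by omega), sub_half, split, add_add_add_comm]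

end Sums

section RootsOfUnity

theorem inv_pow_eq_pow_sub {G : Type*} [DivisionMonoid G] {z : G} {n k : ℕ} (hz : z ^ n = 1)
    (hk : k ≤ n) : z⁻¹ ^ k = z ^ (n - k) := by
  rw [inv_pow]
  exact inv_eq_of_mul_eq_one_right (by rw [← pow_add, Nat.add_sub_cancel' hk, hz])

theorem sum_range_pow_pow_of_isPrimitiveRoot {R : Type*} [CommRing R] [IsDomain R] {ζ : R} {n : ℕ}
    (hζ : IsPrimitiveRoot ζ n) (a : ℕ) :
    ∑ k ∈ Finset.range n, (ζ ^ a) ^ k = if n ∣ a then (n : R) else 0 := by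
  split_ifs with h
  · simp [(hζ.pow_eq_one_iff_dvd a).2 h]
  · have pow_sub_one_ne_zero : ζ ^ a - 1 ≠ 0 := sub_ne_zero.2 (mt (hζ.pow_eq_one_iff_dvd a).1 h)
    refine (mul_eq_zero.1 ?_).resolve_right pow_sub_one_ne_zero
    rw [geom_sum_mul, pow_right_comm, hζ.pow_eq_one, one_pow, sub_self]

theorem omC_pow_self {d : ℕ} [NeZero d] : omC d ^ d = 1 :=
  (Complex.isPrimitiveRoot_exp d (NeZero.ne d)).pow_eq_one

theorem isPrimitiveRoot_etC {d : ℕ} [Fact (1 < d)] : IsPrimitiveRoot (etC d) (d - 1) := by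
  have hd : 1 < d := Fact.out
  simpa [etC, Nat.cast_sub hd.le] using Complex.isPrimitiveRoot_exp (d - 1) (by omega)

end RootsOfUnity

section MonomialMatrices

variable {n R : Type*} [Fintype n] [CommSemiring R]

theorem mul_kronecker_mul_mulVec_eq_self {A B : Matrix n n R} {v : n × n → R}
    (hA : (A ⊗ₖ A) *ᵥ v = v) (hB : (B ⊗ₖ B) *ᵥ v = v) :
    ((A * B) ⊗ₖ (A * B)) *ᵥ v = v := by
  rw [mul_kronecker_mul, ← mulVec_mulVec, hB, hA]

variable [DecidableEq n]

theorem permMatrix_kronecker_mulVec_vec_permMatrix {σ τ : Equiv.Perm n} (h : Commute σ τ) :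
    (σ.permMatrix R ⊗ₖ σ.permMatrix R) *ᵥ vec (τ.permMatrix R) = vec (τ.permMatrix R) := by
  rw [kronecker_mulVec_vec, transpose_permMatrix, ← permMatrix_mul, ← permMatrix_mul, ← h.eq,
    inv_mul_cancel_left]

theorem diagonal_kronecker_mulVec_vec_permMatrix {w : n → R} {τ : Equiv.Perm n}
    (h : ∀ i, w i * w (τ i) = 1) :
    (diagonal w ⊗ₖ diagonal w) *ᵥ vec (τ.permMatrix R) = vec (τ.permMatrix R) := by
  rw [kronecker_mulVec_vec, diagonal_transpose]
  congr 1
  ext i j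
  rw [mul_diagonal, diagonal_mul]
  by_cases hij : τ i = j
  · subst hij
    simp [h]
  · simp [hij]

theorem sum_smul_single_eq_diagonal_mul_permMatrix (w : n → R) (σ : Equiv.Perm n) :
    ∑ i, w i • single i (σ i) (1 : R) = diagonal w * σ.permMatrix R := by
  ext i j
  simp [Matrix.sum_apply, single_apply, Equiv.toPEquiv_apply, ite_and]

end MonomialMatrices

namespace NzRes

/-- The permutation `x ↦ -x` of the nonzero residues; `ψ̃` is, up to a scalar, the vectorization
of its matrix. -/
def negPerm (d : ℕ) : Equiv.Perm (NzRes d) :=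
  (Equiv.neg (ZMod d)).subtypePerm fun _ => neg_ne_zero

/-- The permutation `x ↦ x⁻¹` of the nonzero residues, whose matrix turns out to be `A₄`. -/
def invPerm (d : ℕ) [Fact d.Prime] : Equiv.Perm (NzRes d) :=
  (Equiv.inv (ZMod d)).subtypePerm fun _ => inv_eq_zero.not

/-- The permutation `x ↦ x * c` of the nonzero residues. Since `σ.permMatrix` has its ones at the
entries `(i, σ i)`, the matrix `U x_k = x_{k·r⁻¹}` corresponds to multiplication by `c = r`, not by
`r⁻¹`. -/
def mulRightPerm {d : ℕ} [Fact d.Prime] (c : ZMod d) (hc : c ≠ 0) : Equiv.Perm (NzRes d) :=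
  (Equiv.mulRight₀ c hc).subtypePerm fun _ => mul_ne_zero_iff_right hc

@[simp]
theorem coe_negPerm {d : ℕ} (x : NzRes d) : (negPerm d x : ZMod d) = -x := rfl

@[simp]
theorem coe_invPerm {d : ℕ} [Fact d.Prime] (x : NzRes d) :
    (invPerm d x : ZMod d) = (x : ZMod d)⁻¹ := rfl

@[simp]
theorem coe_mulRightPerm {d : ℕ} [Fact d.Prime] {c : ZMod d} (hc : c ≠ 0) (x : NzRes d) :
    (mulRightPerm c hc x : ZMod d) = x * c := rfl

theorem commute_invPerm_negPerm (d : ℕ) [Fact d.Prime] : Commute (invPerm d) (negPerm d) :=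
  Equiv.ext fun x => Subtype.ext (inv_neg (a := (x : ZMod d)))

theorem commute_mulRightPerm_negPerm {d : ℕ} [Fact d.Prime] {c : ZMod d} (hc : c ≠ 0) :
    Commute (mulRightPerm c hc) (negPerm d) :=
  Equiv.ext fun x => Subtype.ext (neg_mul (x : ZMod d) c)

theorem negPerm_eq_iff {d : ℕ} {x y : NzRes d} : negPerm d x = y ↔ negPerm d y = x := by
  rw [Subtype.ext_iff, Subtype.ext_iff, coe_negPerm, coe_negPerm, neg_eq_iff_eq_neg, eq_comm]

section

variable {d : ℕ} [Fact (1 < d)]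

theorem coe_xv {j : ℕ} (hj : (j : ZMod d) ≠ 0) : (xv d j : ZMod d) = j := by
  rw [xv, dif_pos hj]

theorem xv_val (x : NzRes d) : xv d (x : ZMod d).val = x := by
  have cast_val : (((x : ZMod d).val : ℕ) : ZMod d) = x := ZMod.natCast_rightInverse _
  have cast_ne_zero : (((x : ZMod d).val : ℕ) : ZMod d) ≠ 0 := cast_val.trans_ne x.2
  exact Subtype.ext ((coe_xv cast_ne_zero).trans cast_val)

theorem xv_sub_val (x : NzRes d) : xv d (d - (x : ZMod d).val) = negPerm d x := by
  have : NeZero (x : ZMod d) := ⟨x.2⟩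
  rw [← xv_val (negPerm d x)]
  exact congrArg (xv d) (ZMod.val_neg_of_ne_zero (x : ZMod d)).symm

theorem sum_Icc_eq_sum {M : Type*} [AddCommMonoid M] (f : ℕ → M) :
    ∑ j ∈ Finset.Icc 1 (d - 1), f j = ∑ x : NzRes d, f (x : ZMod d).val := by
  have val_xv {j : ℕ} (hj : j ∈ Finset.Icc 1 (d - 1)) : (xv d j : ZMod d).val = j := by
    rw [Finset.mem_Icc] at hj
    have val_cast : (j : ZMod d).val = j := ZMod.val_natCast_of_lt (by omega)
    rw [coe_xv, val_cast]
    rw [← ZMod.val_ne_zero, val_cast]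
    omega
  refine Finset.sum_nbij' (xv d) (fun x => (x : ZMod d).val) (by simp) (fun x _ => ?_)
    (fun j hj => val_xv hj) (fun x _ => xv_val x) fun j hj => by rw [val_xv hj]
  have val_ne_zero : (x : ZMod d).val ≠ 0 := (ZMod.val_ne_zero _).2 x.2
  have val_lt : (x : ZMod d).val < d := ZMod.val_lt _
  exact Finset.mem_Icc.2 (by omega)

end

end NzRes

open NzRes

section StandardBasis

variable {d : ℕ} [Fact (1 < d)]

theorem A2_eq_permMatrix : A2 d = (negPerm d).permMatrix ℂ := by
  rw [A2, sum_Icc_eq_sum]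
  simpa [xv_val, xv_sub_val] using
    sum_smul_single_eq_diagonal_mul_permMatrix (1 : NzRes d → ℂ) (negPerm d)

theorem A1_eq_Omat_mul_A2 (hodd : Odd d) : A1 d = Omat d * A2 d := by
  have fold : A1 d = ∑ j ∈ Finset.Icc 1 (d - 1),
      omC d ^ j • single (xv d j) (xv d (d - j)) (1 : ℂ) := by
    rw [A1, ← sum_Icc_add_reflect_of_odd _ hodd]
    refine Finset.sum_congr rfl fun j hj => ?_
    have hjd : j ≤ d := by rw [Finset.mem_Icc] at hj; omega
    rw [inv_pow_eq_pow_sub omC_pow_self hjd, Nat.sub_sub_self hjd]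
  rw [fold, sum_Icc_eq_sum, A2_eq_permMatrix, Omat,
    ← sum_smul_single_eq_diagonal_mul_permMatrix]
  simp only [xv_val, xv_sub_val]

theorem psiT_eq_smul_vec :
    psiT d = (Real.sqrt ((d : ℝ) - 1) : ℂ)⁻¹ • vec ((negPerm d).permMatrix ℂ) := by
  ext p
  rw [psiT, sum_Icc_eq_sum]
  simp only [xv_val, xv_sub_val, Pi.single_apply, ite_mul, one_mul, zero_mul, Finset.sum_ite_eq,
    Finset.mem_univ, if_true]
  simp [vec, Equiv.toPEquiv_apply, negPerm_eq_iff (x := p.2), eq_comm (a := p.2)]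

theorem permMatrix_kronecker_mulVec_psiT {σ : Equiv.Perm (NzRes d)}
    (h : Commute σ (negPerm d)) : (σ.permMatrix ℂ ⊗ₖ σ.permMatrix ℂ) *ᵥ psiT d = psiT d := by
  rw [psiT_eq_smul_vec, mulVec_smul, permMatrix_kronecker_mulVec_vec_permMatrix h]

theorem Omat_kronecker_mulVec_psiT : (Omat d ⊗ₖ Omat d) *ᵥ psiT d = psiT d := by
  have phases_cancel (x : NzRes d) :
      omC d ^ (x : ZMod d).val * omC d ^ (negPerm d x : ZMod d).val = 1 := by
    have : NeZero (x : ZMod d) := ⟨x.2⟩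
    have val_neg : (negPerm d x : ZMod d).val = d - (x : ZMod d).val := ZMod.val_neg_of_ne_zero _
    rw [val_neg, ← pow_add, Nat.add_sub_cancel' (ZMod.val_lt _).le, omC_pow_self]
  rw [psiT_eq_smul_vec, mulVec_smul, Omat, diagonal_kronecker_mulVec_vec_permMatrix phases_cancel]

end StandardBasis

section FourierBasis

variable {d r : ℕ} [Fact d.Prime]

theorem Umat_eq_permMatrix (hr : (r : ZMod d) ≠ 0) :
    Umat d r = (mulRightPerm (r : ZMod d) hr).permMatrix ℂ := by
  ext x y
  simp [Umat, Equiv.toPEquiv_apply, Subtype.ext_iff, eq_mul_inv_iff_mul_eq₀ hr]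

theorem ne_zero_of_isPrimitiveRoot (hr : IsPrimitiveRoot (r : ZMod d) (d - 1)) :
    (r : ZMod d) ≠ 0 :=
  hr.ne_zero (Nat.sub_ne_zero_of_lt (Fact.out : d.Prime).one_lt)

theorem exists_pow_eq_coe (hr : IsPrimitiveRoot (r : ZMod d) (d - 1)) (x : NzRes d) :
    ∃ i : ℕ, (r : ZMod d) ^ i = x := by
  have : NeZero (d - 1) := ⟨Nat.sub_ne_zero_of_lt (Fact.out : d.Prime).one_lt⟩
  obtain ⟨i, -, hi⟩ := hr.eq_pow_of_pow_eq_one (ZMod.pow_card_sub_one_eq_one x.2)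
  exact ⟨i, hi⟩

theorem uvec_apply_of_pow_eq (hr : IsPrimitiveRoot (r : ZMod d) (d - 1)) {x : NzRes d} {i : ℕ}
    (hi : (r : ZMod d) ^ i = x) (k : ℕ) :
    uvec d r k x = (Real.sqrt ((d : ℝ) - 1) : ℂ)⁻¹ * etC d ^ (i * k) := by
  have hd : 0 < d - 1 := Nat.sub_pos_of_lt (Fact.out : d.Prime).one_lt
  have pow_mod : (r : ZMod d) ^ (i % (d - 1)) = x := by
    rw [hr.eq_orderOf, pow_mod_orderOf, hi]
  have etC_pow_mod : etC d ^ (i % (d - 1)) = etC d ^ i := by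
    rw [isPrimitiveRoot_etC.eq_orderOf, pow_mod_orderOf]
  have eq_xv_iff (j : ℕ) : x = xv d (r ^ j) ↔ (r : ZMod d) ^ j = x := by
    have pow_ne : ((r ^ j : ℕ) : ZMod d) ≠ 0 := by
      rw [Nat.cast_pow]
      exact pow_ne_zero j (ne_zero_of_isPrimitiveRoot hr)
    rw [Subtype.ext_iff, coe_xv pow_ne, Nat.cast_pow, eq_comm]
  rw [uvec, Finset.sum_eq_single (i % (d - 1))]
  · rw [Pi.single_apply, if_pos ((eq_xv_iff _).2 pow_mod), mul_one, pow_mul, etC_pow_mod, pow_mul]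
  · intro j hj hji
    rw [Pi.single_apply, if_neg, mul_zero]
    exact fun h => hji (hr.pow_inj (Finset.mem_range.1 hj) (Nat.mod_lt i hd)
      (((eq_xv_iff j).1 h).trans pow_mod.symm))
  · exact fun h => absurd (Finset.mem_range.2 (Nat.mod_lt i hd)) h

theorem star_uvec (hr : IsPrimitiveRoot (r : ZMod d) (d - 1)) {k l : ℕ} (hkl : d - 1 ∣ k + l) :
    star (uvec d r k) = uvec d r l := by
  have conj_etC : starRingEnd ℂ (etC d) = (etC d)⁻¹ :=
    (Complex.inv_eq_conj (isPrimitiveRoot_etC.norm'_eq_one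
      (Nat.sub_ne_zero_of_lt (Fact.out : d.Prime).one_lt))).symm
  ext x
  obtain ⟨i, hi⟩ := exists_pow_eq_coe hr x
  have etC_pow : etC d ^ (i * k) * etC d ^ (i * l) = 1 := by
    rw [← pow_add, ← mul_add, isPrimitiveRoot_etC.pow_eq_one_iff_dvd]
    exact hkl.mul_left i
  rw [Pi.star_apply, uvec_apply_of_pow_eq hr hi, uvec_apply_of_pow_eq hr hi, RCLike.star_def,
    map_mul, map_inv₀, Complex.conj_ofReal, map_pow, conj_etC, inv_pow,
    inv_eq_of_mul_eq_one_right etC_pow]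

theorem Umat_mulVec_uvec (hr : IsPrimitiveRoot (r : ZMod d) (d - 1)) (k : ℕ) :
    Umat d r *ᵥ uvec d r k = etC d ^ k • uvec d r k := by
  have hr₀ := ne_zero_of_isPrimitiveRoot hr
  ext x
  obtain ⟨i, hi⟩ := exists_pow_eq_coe hr x
  have hi' : (r : ZMod d) ^ (i + 1) = mulRightPerm (r : ZMod d) hr₀ x := by
    rw [pow_succ, hi, coe_mulRightPerm]
  rw [Umat_eq_permMatrix hr₀, permMatrix_mulVec, Function.comp_apply, Pi.smul_apply,
    uvec_apply_of_pow_eq hr hi', uvec_apply_of_pow_eq hr hi, smul_eq_mul]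
  ring

theorem sum_vecMulVec_uvec (hr : IsPrimitiveRoot (r : ZMod d) (d - 1)) :
    ∑ k ∈ Finset.range (d - 1), vecMulVec (uvec d r k) (uvec d r k) =
      (invPerm d).permMatrix ℂ := by
  have hd : 1 < d := (Fact.out : d.Prime).one_lt
  have sqrt_sq : (Real.sqrt ((d : ℝ) - 1) : ℂ) ^ 2 = (d - 1 : ℕ) := by
    rw [← Complex.ofReal_pow, Real.sq_sqrt (by simpa using hd.le), Nat.cast_sub hd.le]
    simp
  have card_ne_zero : ((d - 1 : ℕ) : ℂ) ≠ 0 := Nat.cast_ne_zero.2 (Nat.sub_ne_zero_of_lt hd)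
  ext x y
  obtain ⟨i, hi⟩ := exists_pow_eq_coe hr x
  obtain ⟨j, hj⟩ := exists_pow_eq_coe hr y
  have term (k : ℕ) : uvec d r k x * uvec d r k y =
      ((d - 1 : ℕ) : ℂ)⁻¹ * (etC d ^ (i + j)) ^ k := by
    rw [uvec_apply_of_pow_eq hr hi, uvec_apply_of_pow_eq hr hj, ← sqrt_sq]
    ring
  have dvd_iff : d - 1 ∣ i + j ↔ invPerm d x = y := by
    rw [← hr.pow_eq_one_iff_dvd, pow_add, hi, hj, mul_eq_one_iff_inv_eq₀ x.2, Subtype.ext_iff,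
      coe_invPerm]
  simp only [Matrix.sum_apply, vecMulVec_apply, term]
  rw [← Finset.mul_sum, sum_range_pow_pow_of_isPrimitiveRoot isPrimitiveRoot_etC]
  simp [dvd_iff, card_ne_zero, Equiv.toPEquiv_apply]

theorem folded_sum_smul_vecMulVec_uvec (hodd : Odd d)
    (hr : IsPrimitiveRoot (r : ZMod d) (d - 1)) (w : ℕ → ℂ) :
    w 0 • vecMulVec (uvec d r 0) (star (uvec d r 0)) +
      w ((d - 1) / 2) • vecMulVec (uvec d r ((d - 1) / 2)) (star (uvec d r ((d - 1) / 2))) +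
      ∑ k ∈ Finset.Icc 1 ((d - 3) / 2),
        (w k • vecMulVec (uvec d r k) (star (uvec d r (d - 1 - k))) +
          w (d - 1 - k) • vecMulVec (uvec d r (d - 1 - k)) (star (uvec d r k))) =
      ∑ k ∈ Finset.range (d - 1), w k • vecMulVec (uvec d r k) (uvec d r k) := by
  have hd : d - 1 ≠ 0 := Nat.sub_ne_zero_of_lt (Fact.out : d.Prime).one_lt
  have heven : Even (d - 1) := Nat.Odd.sub_odd hodd odd_one
  have half_add_half : (d - 1) / 2 + (d - 1) / 2 = d - 1 := by
    rw [← mul_two, Nat.div_two_mul_two_of_even heven]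
  rw [← add_add_sum_Icc_add_reflect_of_even _ heven hd,
    star_uvec (k := 0) (l := 0) hr (dvd_zero _), star_uvec hr half_add_half.symm.dvd]
  congr 1
  refine Finset.sum_congr rfl fun k hk => ?_
  have hkd : k ≤ d - 1 := by rw [Finset.mem_Icc] at hk; omega
  rw [star_uvec hr (Nat.sub_add_cancel hkd).symm.dvd,
    star_uvec hr (Nat.add_sub_cancel' hkd).symm.dvd]

theorem A4_eq_permMatrix (hodd : Odd d) (hr : IsPrimitiveRoot (r : ZMod d) (d - 1)) :
    A4 d r = (invPerm d).permMatrix ℂ := by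
  rw [A4, ← sum_vecMulVec_uvec hr]
  simpa [add_comm] using folded_sum_smul_vecMulVec_uvec hodd hr 1

theorem A3_eq_Umat_mul_A4 (hodd : Odd d) (hr : IsPrimitiveRoot (r : ZMod d) (d - 1)) :
    A3 d r = Umat d r * A4 d r := by
  have fold : A3 d r =
      ∑ k ∈ Finset.range (d - 1), etC d ^ k • vecMulVec (uvec d r k) (uvec d r k) := by
    rw [A3, ← folded_sum_smul_vecMulVec_uvec hodd hr, pow_zero, one_smul]
    congr 1
    refine Finset.sum_congr rfl fun k hk => ?_
    have hkd : k ≤ d - 1 := by rw [Finset.mem_Icc] at hk; omega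
    rw [inv_pow_eq_pow_sub isPrimitiveRoot_etC.pow_eq_one hkd]
  rw [fold, A4_eq_permMatrix hodd hr, ← sum_vecMulVec_uvec hr, Finset.mul_sum]
  simp only [mul_vecMulVec, Umat_mulVec_uvec hr, smul_vecMulVec]

end FourierBasis

/-- The maximally entangled state `ψ̃` is invariant under `A_i ⊗ A_i`
for `i = 1,2,3,4`, and consequently under `O ⊗ O` and `U ⊗ U`. -/
theorem stmt_11 (d r : ℕ) [Fact d.Prime] (hodd : Odd d)
    (hr : orderOf (r : ZMod d) = d - 1) :
    (A1 d ⊗ₖ A1 d).mulVec (psiT d) = psiT d ∧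
    (A2 d ⊗ₖ A2 d).mulVec (psiT d) = psiT d ∧
    (A3 d r ⊗ₖ A3 d r).mulVec (psiT d) = psiT d ∧
    (A4 d r ⊗ₖ A4 d r).mulVec (psiT d) = psiT d ∧
    (Omat d ⊗ₖ Omat d).mulVec (psiT d) = psiT d ∧
    (Umat d r ⊗ₖ Umat d r).mulVec (psiT d) = psiT d := by
  have hroot : IsPrimitiveRoot (r : ZMod d) (d - 1) := IsPrimitiveRoot.iff_orderOf.2 hr
  have hr₀ := ne_zero_of_isPrimitiveRoot hroot
  have hO : (Omat d ⊗ₖ Omat d) *ᵥ psiT d = psiT d := Omat_kronecker_mulVec_psiT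
  have hU : (Umat d r ⊗ₖ Umat d r) *ᵥ psiT d = psiT d := by
    rw [Umat_eq_permMatrix hr₀]
    exact permMatrix_kronecker_mulVec_psiT (commute_mulRightPerm_negPerm hr₀)
  have h₂ : (A2 d ⊗ₖ A2 d) *ᵥ psiT d = psiT d := by
    rw [A2_eq_permMatrix]
    exact permMatrix_kronecker_mulVec_psiT (Commute.refl _)
  have h₄ : (A4 d r ⊗ₖ A4 d r) *ᵥ psiT d = psiT d := by
    rw [A4_eq_permMatrix hodd hroot]
    exact permMatrix_kronecker_mulVec_psiT (commute_invPerm_negPerm d)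
  have h₁ : (A1 d ⊗ₖ A1 d) *ᵥ psiT d = psiT d := by
    rw [A1_eq_Omat_mul_A2 hodd]
    exact mul_kronecker_mul_mulVec_eq_self hO h₂
  have h₃ : (A3 d r ⊗ₖ A3 d r) *ᵥ psiT d = psiT d := by
    rw [A3_eq_Umat_mul_A4 hodd hroot]
    exact mul_kronecker_mul_mulVec_eq_self hU h₄
  exact ⟨h₁, h₂, h₃, h₄, hO, hU⟩
end

section
/- Let α be a real number with α ≥ 1 and μ = arctan(1/α). Then ⟨EPR| (α·M̃₁⊗Ñ₁ + α·M̃₁⊗Ñ₂ + M̃₂⊗Ñ₁ − M̃₂⊗Ñ₂) |EPR⟩ = 2√(1+α²), where M̃₁ = σ_z, M̃₂ = σ_x, Ñ₁ = cos(μ)σ_z + sin(μ)σ_x, Ñ₂ = cos(μ)σ_z − sin(μ)σ_x. -/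
open Matrix Kronecker

/-! On a maximally entangled state, `⟨A ⊗ B⟩` is the normalized trace of `A Bᵀ`.  The cross terms of
the weighted CHSH operator cancel, leaving `2α cos μ (Z ⊗ Z) + 2 sin μ (X ⊗ X)`; both remaining
correlations are perfect, and `tan μ = 1/α` is the angle at which `α cos μ + sin μ` equals the norm
of `(α, 1)`. -/

/-- The CHSH operator in which the first party's first observable has weight `a`. -/
def weightedCHSH {R m n p q : Type*} [Ring R] (a : R) (M₁ M₂ : Matrix m n R)
    (N₁ N₂ : Matrix p q R) : Matrix (m × p) (n × q) R :=
  a • (M₁ ⊗ₖ N₁) + a • (M₁ ⊗ₖ N₂) + M₂ ⊗ₖ N₁ - M₂ ⊗ₖ N₂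

theorem weightedCHSH_add_sub {R m n p q : Type*} [CommRing R] (a : R)
    (M₁ M₂ : Matrix m n R) (P Q : Matrix p q R) :
    weightedCHSH a M₁ M₂ (P + Q) (P - Q) = (2 * a) • (M₁ ⊗ₖ P) + (2 : R) • (M₂ ⊗ₖ Q) := by
  simp only [weightedCHSH, sub_eq_add_neg P Q, ← neg_one_smul R Q, kronecker_add, kronecker_smul]
  module

section MaximallyEntangled

variable {n : Type*} [Fintype n] [DecidableEq n]

variable (n) in
/-- The maximally entangled state `|n|^(-1/2) ∑ i, |i⟩|i⟩` of `ℂⁿ ⊗ ℂⁿ`, the `n`-level analogue of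
`|EPR⟩`. It is encoded as the vectorized identity matrix so that `kronecker_mulVec_vec` applies. -/
noncomputable def maximallyEntangled : n × n → ℂ :=
  (√(Fintype.card n) : ℂ)⁻¹ • vec (1 : Matrix n n ℂ)

theorem maximallyEntangled_fin_two :
    maximallyEntangled (Fin 2) = fun p => if p.1 = p.2 then (√2 : ℂ)⁻¹ else 0 := by
  ext p
  simp [maximallyEntangled, vec, one_apply, eq_comm]

theorem star_vec_one_dotProduct_kronecker_mulVec {R : Type*} [CommSemiring R] [StarRing R]
    (A B : Matrix n n R) :
    star (vec (1 : Matrix n n R)) ⬝ᵥ (A ⊗ₖ B) *ᵥ vec 1 = trace (A * Bᵀ) := by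
  rw [kronecker_mulVec_vec, star_vec_dotProduct_vec, conjTranspose_one, one_mul, mul_one,
    ← trace_transpose, transpose_mul, transpose_transpose]

theorem maximallyEntangled_expectation_kronecker (A B : Matrix n n ℂ) :
    star (maximallyEntangled n) ⬝ᵥ (A ⊗ₖ B) *ᵥ maximallyEntangled n =
      (Fintype.card n : ℂ)⁻¹ * trace (A * Bᵀ) := by
  have normalization : star (√(Fintype.card n) : ℂ)⁻¹ * (√(Fintype.card n) : ℂ)⁻¹ =
      (Fintype.card n : ℂ)⁻¹ := by
    rw [star_inv₀, Complex.star_def, Complex.conj_ofReal, ← mul_inv, ← Complex.ofReal_mul,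
      Real.mul_self_sqrt (Nat.cast_nonneg _), Complex.ofReal_natCast]
  rw [maximallyEntangled, star_smul, mulVec_smul, smul_dotProduct, dotProduct_smul, smul_smul,
    star_vec_one_dotProduct_kronecker_mulVec, normalization, smul_eq_mul]

theorem maximallyEntangled_expectation_kronecker_self [Nonempty n] {A : Matrix n n ℂ}
    (hA : A * Aᵀ = 1) :
    star (maximallyEntangled n) ⬝ᵥ (A ⊗ₖ A) *ᵥ maximallyEntangled n = 1 := by
  rw [maximallyEntangled_expectation_kronecker, hA, trace_one,
    inv_mul_cancel₀ (Nat.cast_ne_zero.mpr Fintype.card_ne_zero)]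

theorem maximallyEntangled_expectation_weightedCHSH [Nonempty n] (a c s : ℂ)
    {Z X : Matrix n n ℂ} (hZ : Z * Zᵀ = 1) (hX : X * Xᵀ = 1) :
    star (maximallyEntangled n) ⬝ᵥ weightedCHSH a Z X (c • Z + s • X) (c • Z - s • X) *ᵥ
      maximallyEntangled n = 2 * (a * c + s) := by
  rw [weightedCHSH_add_sub, kronecker_smul, kronecker_smul, smul_smul, smul_smul, add_mulVec,
    dotProduct_add, smul_mulVec, smul_mulVec, dotProduct_smul, dotProduct_smul,
    maximallyEntangled_expectation_kronecker_self hZ,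
    maximallyEntangled_expectation_kronecker_self hX, smul_eq_mul, smul_eq_mul]
  ring

end MaximallyEntangled

theorem mul_cos_add_sin_arctan_one_div {α : ℝ} (hα : 0 < α) :
    α * Real.cos (Real.arctan (1 / α)) + Real.sin (Real.arctan (1 / α)) = √(1 + α ^ 2) := by
  rw [one_div, Real.arctan_inv_of_pos hα, Real.cos_pi_div_two_sub, Real.sin_pi_div_two_sub,
    Real.sin_arctan, Real.cos_arctan]
  calc α * (α / √(1 + α ^ 2)) + 1 / √(1 + α ^ 2)
      = (1 + α ^ 2) / √(1 + α ^ 2) := by ring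
    _ = √(1 + α ^ 2) := Real.div_sqrt

theorem pauliZ_mul_transpose {R : Type*} [NonAssocRing R] :
    !![(1 : R), 0; 0, -1] * !![1, 0; 0, -1]ᵀ = 1 := by
  simp [eta_fin_two (transpose _), one_fin_two]

theorem pauliX_mul_transpose {R : Type*} [NonAssocSemiring R] :
    !![(0 : R), 1; 1, 0] * !![0, 1; 1, 0]ᵀ = 1 := by
  simp [eta_fin_two (transpose _), one_fin_two]

theorem stmt_12_general {n : Type*} [Fintype n] [DecidableEq n] [Nonempty n]
    {α : ℝ} (hα : 0 < α) {μ : ℝ} (hμ : μ = Real.arctan (1 / α))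
    {Z X : Matrix n n ℂ} (hZ : Z * Zᵀ = 1) (hX : X * Xᵀ = 1) :
    star (maximallyEntangled n) ⬝ᵥ
        weightedCHSH (α : ℂ) Z X ((Real.cos μ : ℂ) • Z + (Real.sin μ : ℂ) • X)
          ((Real.cos μ : ℂ) • Z - (Real.sin μ : ℂ) • X) *ᵥ maximallyEntangled n =
      ((2 * √(1 + α ^ 2) : ℝ) : ℂ) := by
  rw [maximallyEntangled_expectation_weightedCHSH _ _ _ hZ hX,
    ← mul_cos_add_sin_arctan_one_div hα, ← hμ]
  norm_cast

/-- The ideal strategy achieves the value `2√(1+α²)` of the α-weighted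
CHSH Bell expression.  Here `σ_z`, `σ_x` are the Pauli matrices, `|EPR⟩ = (|00⟩+|11⟩)/√2`
is represented as the function `(i,j) ↦ if i = j then 1/√2 else 0` on `Fin 2 × Fin 2`, the
tensor product of operators is the Kronecker product, and `⟨ψ|T|ψ⟩ = (star ψ) ⬝ᵥ (T ψ)`. -/
theorem stmt_12 (α : ℝ) (hα : 1 ≤ α) (μ : ℝ) (hμ : μ = Real.arctan (1 / α))
    (σz σx : Matrix (Fin 2) (Fin 2) ℂ)
    (hσz : σz = !![1, 0; 0, -1]) (hσx : σx = !![0, 1; 1, 0])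
    (M₁ M₂ N₁ N₂ : Matrix (Fin 2) (Fin 2) ℂ)
    (hM₁ : M₁ = σz) (hM₂ : M₂ = σx)
    (hN₁ : N₁ = (Real.cos μ : ℂ) • σz + (Real.sin μ : ℂ) • σx)
    (hN₂ : N₂ = (Real.cos μ : ℂ) • σz - (Real.sin μ : ℂ) • σx)
    (EPR : Fin 2 × Fin 2 → ℂ)
    (hEPR : EPR = fun p => if p.1 = p.2 then ((Real.sqrt 2 : ℂ))⁻¹ else 0) :
    star EPR ⬝ᵥ ((α : ℂ) • (M₁ ⊗ₖ N₁) + (α : ℂ) • (M₁ ⊗ₖ N₂) +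
        M₂ ⊗ₖ N₁ - M₂ ⊗ₖ N₂).mulVec EPR
      = ((2 * Real.sqrt (1 + α ^ 2) : ℝ) : ℂ) := by
  subst hσz hσx hM₁ hM₂ hN₁ hN₂
  rw [hEPR, ← maximallyEntangled_fin_two]
  exact stmt_12_general (zero_lt_one.trans_le hα) hμ pauliZ_mul_transpose pauliX_mul_transpose
end

section
/- There is a universal constant C > 0 with the following property. Let H_A, H_B be finite-dimensional complex Hilbert spaces, ψ ∈ H_A ⊗ H_B a unit vector, O_A, U_A unitaries on H_A, O_B, U_B unitaries on H_B, r ≥ 2 an integer, and δ, δ₀ ≥ 0 real numbers. Suppose ‖(O_A ⊗ 1)ψ − (1 ⊗ O_B)ψ‖ ≤ δ, ‖(U_A ⊗ 1)ψ − (1 ⊗ U_B)ψ‖ ≤ δ, and ‖((O_A U_A^† − U_A^† O_A^r) ⊗ 1)ψ‖ ≤ δ₀. Then for every integer l ≥ 1: ‖((O_A (U_A^†)^l − (U_A^†)^l O_A^{r^l}) ⊗ 1)ψ‖ ≤ C·r^{l+1}·(δ + δ₀). -/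
open Matrix Kronecker

/-- The action of a matrix on a vector of the corresponding Euclidean (Hilbert) space. -/
noncomputable def mApply {ι κ : Type*} [Fintype ι] (A : Matrix κ ι ℂ) (v : EuclideanSpace ℂ ι) :
    EuclideanSpace ℂ κ :=
  (WithLp.equiv 2 (κ → ℂ)).symm (A.mulVec (WithLp.equiv 2 (ι → ℂ) v))

/-!
Write `y ≈ z` for a small distance. If `u • x ≈ w • x` and `w` commutes with `g` and `h`, then
`g • u • x ≈ g • w • x = w • g • x`, and likewise for `h`. So a comparison of `g • x` with `h • x`
survives multiplying `g` and `h` on the right by `u`, at the cost of twice the distance from `u • x`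
to `w • x`. Bob's unitaries play the role of `w` for Alice's `u`.

With `a = O_A` and `u = U_A†`, this upgrades `a u ≈ u aʳ` to `aᵏ u ≈ u aʳᵏ` with an error linear in
`k`. Applied with `k = rⁱ` at the `i`-th of `l` steps, it moves `a` past `uˡ`, and the errors add up
to a geometric sum.
-/

section IsometricAction

variable {X : Type*} [PseudoMetricSpace X]

section Monoid

variable {M : Type*} [Monoid M] [MulAction M X] [IsIsometricSMul M X] {a b c d g h u w : M}

theorem dist_mul_smul_mul_smul_le (hg : Commute g w) (hh : Commute h w) (u : M) (x : X) :
    dist ((g * u) • x) ((h * u) • x) ≤ dist (g • x) (h • x) + 2 * dist (u • x) (w • x) := by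
  have hgw : dist ((g * u) • x) (w • g • x) = dist (u • x) (w • x) := by
    rw [← mul_smul, ← hg.eq, mul_smul, mul_smul, dist_smul]
  have hhw : dist (w • h • x) ((h * u) • x) = dist (u • x) (w • x) := by
    rw [← mul_smul, ← hh.eq, mul_smul, mul_smul, dist_smul, dist_comm]
  calc
    _ ≤ dist ((g * u) • x) (w • g • x) + dist (w • g • x) (w • h • x)
        + dist (w • h • x) ((h * u) • x) := dist_triangle4 _ _ _ _
    _ = _ := by rw [hgw, hhw, dist_smul]; ring

theorem dist_pow_smul_pow_smul_le (hab : Commute a b) (n : ℕ) (x : X) :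
    dist (a ^ n • x) (b ^ n • x) ≤ n * dist (a • x) (b • x) := by
  induction n with
  | zero => simp
  | succ n ih =>
    calc
      dist (a ^ (n + 1) • x) (b ^ (n + 1) • x)
        ≤ dist (a ^ (n + 1) • x) ((a * b ^ n) • x)
          + dist ((a * b ^ n) • x) (b ^ (n + 1) • x) := dist_triangle _ _ _
      _ = dist (a ^ n • x) (b ^ n • x) + dist (a • x) (b • x) := by
        rw [pow_succ' a, mul_smul, mul_smul, dist_smul, ← mul_smul a, (hab.pow_right n).eq,
          pow_succ b, mul_smul, mul_smul, dist_smul]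
      _ ≤ (n + 1 : ℕ) * dist (a • x) (b • x) := by rw [Nat.cast_succ]; linarith

theorem dist_pow_mul_smul_mul_pow_smul_le (had : Commute a d) (hcd : Commute c d)
    (hud : Commute u d) (k : ℕ) (x : X) :
    dist ((a ^ k * u) • x) ((u * c ^ k) • x) ≤
      k * (dist ((a * u) • x) ((u * c) • x) + 2 * dist (c • x) (d • x)) := by
  induction k with
  | zero => simp
  | succ k ih =>
    have move_one : dist ((a ^ (k + 1) * u) • x) ((a ^ k * u * c) • x) =
        dist ((a * u) • x) ((u * c) • x) := by
      rw [pow_succ, mul_assoc, mul_assoc, mul_smul, mul_smul (a ^ k), dist_smul]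
    have move_rest : dist ((a ^ k * u * c) • x) ((u * c ^ (k + 1)) • x) ≤
        dist ((a ^ k * u) • x) ((u * c ^ k) • x) + 2 * dist (c • x) (d • x) := by
      rw [pow_succ, ← mul_assoc]
      exact dist_mul_smul_mul_smul_le ((had.pow_left k).mul_left hud)
        (hud.mul_left (hcd.pow_left k)) c x
    refine (dist_triangle _ ((a ^ k * u * c) • x) _).trans ?_
    rw [Nat.cast_succ]
    linarith

theorem dist_mul_pow_smul_pow_mul_smul_le (hab : Commute a b) (haw : Commute a w)
    (hub : Commute u b) (huw : Commute u w) (r l : ℕ) (x : X) :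
    dist ((a * u ^ l) • x) ((u ^ l * a ^ r ^ l) • x) ≤
      l * (2 * dist (u • x) (w • x)) + (∑ i ∈ Finset.range l, r ^ i : ℕ) *
        (dist ((a * u) • x) ((u * a ^ r) • x) + 2 * (r * dist (a • x) (b • x))) := by
  induction l with
  | zero => simp
  | succ l ih =>
    have append_u : dist ((a * u ^ (l + 1)) • x) ((u ^ l * a ^ r ^ l * u) • x) ≤
        dist ((a * u ^ l) • x) ((u ^ l * a ^ r ^ l) • x) + 2 * dist (u • x) (w • x) := by
      rw [pow_succ, ← mul_assoc]
      exact dist_mul_smul_mul_smul_le (haw.mul_left (huw.pow_left l))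
        ((huw.pow_left l).mul_left (haw.pow_left _)) u x
    have move_u : dist ((u ^ l * a ^ r ^ l * u) • x) ((u ^ (l + 1) * a ^ r ^ (l + 1)) • x) ≤
        (r ^ l : ℕ) *
          (dist ((a * u) • x) ((u * a ^ r) • x) + 2 * (r * dist (a • x) (b • x))) := by
      rw [pow_succ u, pow_succ' r, pow_mul, mul_assoc, mul_assoc, mul_smul, mul_smul (u ^ l),
        dist_smul]
      refine (dist_pow_mul_smul_mul_pow_smul_le (hab.pow_right r) (hab.pow_pow r r)
        (hub.pow_right r) _ x).trans ?_
      gcongr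
      exact dist_pow_smul_pow_smul_le hab r x
    refine (dist_triangle _ ((u ^ l * a ^ r ^ l * u) • x) _).trans ?_
    rw [Nat.cast_succ, Finset.sum_range_succ, Nat.cast_add]
    linarith

end Monoid

variable {G : Type*} [Group G] [MulAction G X] [IsIsometricSMul G X] {a b u w : G}

theorem dist_inv_smul_inv_smul (huw : Commute u w) (x : X) :
    dist (u⁻¹ • x) (w⁻¹ • x) = dist (u • x) (w • x) := by
  rw [← dist_smul (u * w), mul_smul u w (w⁻¹ • x), smul_inv_smul, huw.eq, mul_smul w u,
    smul_inv_smul, dist_comm]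

theorem stmt_17_general (hab : Commute a b) (haw : Commute a w) (hub : Commute u b)
    (huw : Commute u w) {r : ℕ} (hr : 2 ≤ r) {δ δ₀ : ℝ} {x : X}
    (ha : dist (a • x) (b • x) ≤ δ) (hu : dist (u • x) (w • x) ≤ δ)
    (hau : dist ((a * u⁻¹) • x) ((u⁻¹ * a ^ r) • x) ≤ δ₀) (l : ℕ) :
    dist ((a * u⁻¹ ^ l) • x) ((u⁻¹ ^ l * a ^ r ^ l) • x) ≤ 3 * r ^ (l + 1) * (δ + δ₀) := by
  have hδ : 0 ≤ δ := dist_nonneg.trans ha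
  have hδ₀ : 0 ≤ δ₀ := dist_nonneg.trans hau
  have hr_real : (2 : ℝ) ≤ r := by exact_mod_cast hr
  have exponent_le : (l : ℝ) ≤ r ^ l := by exact_mod_cast (Nat.lt_pow_self hr).le
  have geom_sum_le : ((∑ i ∈ Finset.range l, r ^ i : ℕ) : ℝ) ≤ r ^ l := by
    exact_mod_cast (Nat.geomSum_lt hr fun i hi => Finset.mem_range.mp hi).le
  rw [← dist_inv_smul_inv_smul huw] at hu
  calc
    _ ≤ _ := dist_mul_pow_smul_pow_mul_smul_le hab haw.inv_right hub.inv_left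
      huw.inv_inv r l x
    _ ≤ r ^ l * (2 * δ) + r ^ l * (δ₀ + 2 * (r * δ)) := by gcongr
    _ = r ^ l * (2 * δ + δ₀ + 2 * (r * δ)) := by ring
    _ ≤ r ^ l * (3 * r * (δ + δ₀)) := by gcongr; nlinarith
    _ = _ := by ring

end IsometricAction

section LocalUnitary

variable {ι κ : Type*} [Fintype ι] [DecidableEq ι] [Fintype κ] [DecidableEq κ]

theorem mApply_eq_toEuclideanCLM (A : Matrix ι ι ℂ) (v : EuclideanSpace ℂ ι) :
    mApply A v = toEuclideanCLM (𝕜 := ℂ) A v :=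
  rfl

theorem isometry_mApply {A : Matrix ι ι ℂ} (hA : A ∈ unitaryGroup ι ℂ) : Isometry (mApply A) :=
  AddMonoidHomClass.isometry_of_norm (toEuclideanCLM (𝕜 := ℂ) A)
    (ContinuousLinearMap.norm_map_of_mem_unitary (Unitary.map_mem toEuclideanCLM hA))

/-- The action of local unitaries `(A, B)` on bipartite states by `A ⊗ B`. Both parties are put in
one group so that `(A, 1)` and `(1, B)` are commuting elements of it. -/
noncomputable instance localUnitaryMulAction :
    MulAction (unitaryGroup ι ℂ × unitaryGroup κ ℂ) (EuclideanSpace ℂ (ι × κ)) where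
  smul U ψ := mApply (U.1.val ⊗ₖ U.2.val) ψ
  one_smul ψ := by
    change mApply ((1 : Matrix ι ι ℂ) ⊗ₖ (1 : Matrix κ κ ℂ)) ψ = ψ
    simp [mApply_eq_toEuclideanCLM]
  mul_smul U V ψ := by
    change mApply ((U.1.val * V.1.val) ⊗ₖ (U.2.val * V.2.val)) ψ = mApply _ (mApply _ ψ)
    simp [mApply_eq_toEuclideanCLM, mul_kronecker_mul]

instance localUnitary_isIsometricSMul :
    IsIsometricSMul (unitaryGroup ι ℂ × unitaryGroup κ ℂ) (EuclideanSpace ℂ (ι × κ)) where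
  isometry_smul U := isometry_mApply (kronecker_mem_unitary U.1.property U.2.property)

theorem norm_mApply_sub_kronecker_one (A B : unitaryGroup ι ℂ) (ψ : EuclideanSpace ℂ (ι × κ)) :
    ‖mApply ((A.val - B.val) ⊗ₖ (1 : Matrix κ κ ℂ)) ψ‖ =
      dist (MonoidHom.inl (unitaryGroup ι ℂ) (unitaryGroup κ ℂ) A • ψ)
        (MonoidHom.inl (unitaryGroup ι ℂ) (unitaryGroup κ ℂ) B • ψ) := by
  have sub_kronecker : (A.val - B.val) ⊗ₖ (1 : Matrix κ κ ℂ) = A.val ⊗ₖ 1 - B.val ⊗ₖ 1 := by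
    ext; simp [sub_mul]
  rw [sub_kronecker, dist_eq_norm, mApply_eq_toEuclideanCLM, map_sub]
  rfl

end LocalUnitary

/-- Propagation of the approximate conjugacy relation
`O_A U_A^† ≈ U_A^† O_A^r` (on the state) to all powers `l ≥ 1`. -/
theorem stmt_17 :
    ∃ C : ℝ, 0 < C ∧
      ∀ (nA nB : ℕ) (ψ : EuclideanSpace ℂ (Fin nA × Fin nB)), ‖ψ‖ = 1 →
      ∀ (OA UA : Matrix (Fin nA) (Fin nA) ℂ) (OB UB : Matrix (Fin nB) (Fin nB) ℂ),
        OA ∈ Matrix.unitaryGroup (Fin nA) ℂ → UA ∈ Matrix.unitaryGroup (Fin nA) ℂ →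
        OB ∈ Matrix.unitaryGroup (Fin nB) ℂ → UB ∈ Matrix.unitaryGroup (Fin nB) ℂ →
      ∀ (r : ℕ), 2 ≤ r → ∀ (δ δ₀ : ℝ), 0 ≤ δ → 0 ≤ δ₀ →
        ‖mApply (OA ⊗ₖ (1 : Matrix (Fin nB) (Fin nB) ℂ)) ψ -
          mApply ((1 : Matrix (Fin nA) (Fin nA) ℂ) ⊗ₖ OB) ψ‖ ≤ δ →
        ‖mApply (UA ⊗ₖ (1 : Matrix (Fin nB) (Fin nB) ℂ)) ψ -
          mApply ((1 : Matrix (Fin nA) (Fin nA) ℂ) ⊗ₖ UB) ψ‖ ≤ δ →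
        ‖mApply ((OA * UAᴴ - UAᴴ * OA ^ r) ⊗ₖ (1 : Matrix (Fin nB) (Fin nB) ℂ)) ψ‖ ≤ δ₀ →
      ∀ l : ℕ, 1 ≤ l →
        ‖mApply ((OA * UAᴴ ^ l - UAᴴ ^ l * OA ^ r ^ l) ⊗ₖ
            (1 : Matrix (Fin nB) (Fin nB) ℂ)) ψ‖ ≤ C * r ^ (l + 1) * (δ + δ₀) := by
  refine ⟨3, by norm_num, ?_⟩
  intro nA nB ψ _ OA UA OB UB hOA hUA hOB hUB r hr δ δ₀ _ _ hO hU hOU l _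
  let inl := MonoidHom.inl (unitaryGroup (Fin nA) ℂ) (unitaryGroup (Fin nB) ℂ)
  let inr := MonoidHom.inr (unitaryGroup (Fin nA) ℂ) (unitaryGroup (Fin nB) ℂ)
  let O : unitaryGroup (Fin nA) ℂ := ⟨OA, hOA⟩
  let U : unitaryGroup (Fin nA) ℂ := ⟨UA, hUA⟩
  have inl_commute_inr (A B) : Commute (inl A) (inr B) := MonoidHom.commute_inl_inr A B
  have hO : dist (inl O • ψ) (inr ⟨OB, hOB⟩ • ψ) ≤ δ := (dist_eq_norm _ _).trans_le hO
  have hU : dist (inl U • ψ) (inr ⟨UB, hUB⟩ • ψ) ≤ δ := (dist_eq_norm _ _).trans_le hU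
  have hOU := (norm_mApply_sub_kronecker_one (O * U⁻¹) (U⁻¹ * O ^ r) ψ).symm.trans_le hOU
  refine (norm_mApply_sub_kronecker_one (O * U⁻¹ ^ l) (U⁻¹ ^ l * O ^ r ^ l) ψ).trans_le ?_
  simp only [map_mul, map_pow, map_inv] at hOU ⊢
  exact stmt_17_general (inl_commute_inr _ _) (inl_commute_inr _ _) (inl_commute_inr _ _)
    (inl_commute_inr _ _) hr hO hU hOU l
end

section
/- (Approximate commutation from a joint measurement.) Let H_A, H_B be finite-dimensional complex Hilbert spaces, ψ ∈ H_A ⊗ H_B a unit vector, and δ ≥ 0. Let P be an orthogonal projection on H_A and M a self-adjoint operator on H_A with M² = 1. Let {Q^{b₁,b₂} : b₁ ∈ {0,1,2}, b₂ ∈ {0,1}} be orthogonal projections on H_B that are mutually orthogonal and sum to the identity. Suppose ‖(P ⊗ 1)ψ − (1 ⊗ (Q^{0,0} + Q^{0,1}))ψ‖ ≤ δ and ‖(M ⊗ 1)ψ − (1 ⊗ Σ_{b₁,b₂} (−1)^{b₂} Q^{b₁,b₂})ψ‖ ≤ δ. Then ‖((PM − MP) ⊗ 1)ψ‖ ≤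 4δ. -/
open Matrix Kronecker

/-!
On `ψ`, the operators `P` and `M` may be exchanged for `R = ∑ b, f b • Q b` and `S = ∑ b, g b • Q b`
up to small errors. Since `R` and `S` commute with each other and with `P` and `M`,
`[P, M] ψ = P (M - S) ψ + S (P - R) ψ - M (P - R) ψ - R (M - S) ψ`,
and `P`, `M`, `R`, `S` are contractions. For `R` and `S` this holds because `f ↦ ∑ b, f b • Q b` is
a star homomorphism from the commutative C⋆-algebra of functions of the outcome.
-/

section Measurement

variable {R A κ : Type*} [Fintype κ]

theorem sum_smul_mul_sum_smul [CommSemiring R] [Semiring A] [Algebra R A] {Q : κ → A}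
    (hQ : OrthogonalIdempotents Q) (f g : κ → R) :
    (∑ b, f b • Q b) * ∑ b, g b • Q b = ∑ b, (f b * g b) • Q b := by
  classical
  simp [Finset.sum_mul_sum, hQ.mul_eq, smul_smul, mul_comm]

theorem commute_sum_smul [CommSemiring R] [Semiring A] [Algebra R A] {Q : κ → A}
    (hQ : OrthogonalIdempotents Q) (f g : κ → R) :
    Commute (∑ b, f b • Q b) (∑ b, g b • Q b) := by
  simp only [Commute, SemiconjBy, sum_smul_mul_sum_smul hQ, mul_comm]

variable (R) in
/-- The functional calculus `f ↦ ∑ b, f b • Q b` of a projective measurement `Q`. The projections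
need not sum to the identity, so the homomorphism is non-unital. -/
def measurementStarHom [CommSemiring R] [StarRing R] [Semiring A] [StarRing A] [Algebra R A]
    [StarModule R A] {Q : κ → A} (hQ : OrthogonalIdempotents Q)
    (hQsa : ∀ b, IsSelfAdjoint (Q b)) : (κ → R) →⋆ₙₐ[R] A where
  toFun f := ∑ b, f b • Q b
  map_smul' c f := by simp only [Pi.smul_apply, smul_assoc, Finset.smul_sum, MonoidHom.id_apply]
  map_zero' := by simp
  map_add' f g := by simp only [Pi.add_apply, add_smul, Finset.sum_add_distrib]
  map_mul' f g := (sum_smul_mul_sum_smul hQ f g).symm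
  map_star' f := by simp [star_sum, star_smul, (hQsa _).star_eq]

theorem norm_sum_smul_le [CStarAlgebra A] {Q : κ → A}
    (hQ : OrthogonalIdempotents Q) (hQsa : ∀ b, IsSelfAdjoint (Q b)) (f : κ → ℂ) :
    ‖∑ b, f b • Q b‖ ≤ ‖f‖ :=
  NonUnitalStarAlgHom.norm_apply_le (measurementStarHom ℂ hQ hQsa) f

end Measurement

theorem norm_commutator_apply_le {𝕜 E : Type*} [NontriviallyNormedField 𝕜]
    [SeminormedAddCommGroup E] [NormedSpace 𝕜 E] {P M R S : E →L[𝕜] E}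
    (hPS : Commute P S) (hMR : Commute M R) (hRS : Commute R S) (ψ : E) :
    ‖(P * M - M * P) ψ‖ ≤
      (‖M‖ + ‖S‖) * ‖P ψ - R ψ‖ + (‖P‖ + ‖R‖) * ‖M ψ - S ψ‖ := by
  have commutator_eq :
      P * M - M * P = P * (M - S) + S * (P - R) - M * (P - R) - R * (M - S) := by
    simp only [mul_sub, hPS.eq, hMR.eq, hRS.eq]
    abel
  calc
    ‖(P * M - M * P) ψ‖
        = ‖P (M ψ - S ψ) + S (P ψ - R ψ) - M (P ψ - R ψ) - R (M ψ - S ψ)‖ := by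
      rw [commutator_eq]; rfl
    _ ≤ ‖P (M ψ - S ψ)‖ + ‖S (P ψ - R ψ)‖ + ‖M (P ψ - R ψ)‖ + ‖R (M ψ - S ψ)‖ :=
      norm_sub_le_of_le (norm_sub_le_of_le (norm_add_le _ _) le_rfl) le_rfl
    _ ≤ ‖P‖ * ‖M ψ - S ψ‖ + ‖S‖ * ‖P ψ - R ψ‖ + ‖M‖ * ‖P ψ - R ψ‖ + ‖R‖ * ‖M ψ - S ψ‖ := by
      gcongr <;> exact ContinuousLinearMap.le_opNorm _ _
    _ = (‖M‖ + ‖S‖) * ‖P ψ - R ψ‖ + (‖P‖ + ‖R‖) * ‖M ψ - S ψ‖ := by ring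

theorem norm_commutator_apply_le_of_measurement {H κ : Type*} [NormedAddCommGroup H]
    [InnerProductSpace ℂ H] [CompleteSpace H] [Fintype κ] {P M : H →L[ℂ] H}
    (hP : ‖P‖ ≤ 1) (hM : ‖M‖ ≤ 1) {Q : κ → H →L[ℂ] H}
    (hQ : OrthogonalIdempotents Q) (hQsa : ∀ b, IsSelfAdjoint (Q b))
    (hPQ : ∀ b, Commute P (Q b)) (hMQ : ∀ b, Commute M (Q b))
    {f g : κ → ℂ} (hf : ∀ b, ‖f b‖ ≤ 1) (hg : ∀ b, ‖g b‖ ≤ 1) (ψ : H) :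
    ‖(P * M - M * P) ψ‖ ≤
      2 * (‖P ψ - (∑ b, f b • Q b) ψ‖ + ‖M ψ - (∑ b, g b • Q b) ψ‖) := by
  set R := ∑ b, f b • Q b
  set S := ∑ b, g b • Q b
  have hR : ‖R‖ ≤ 1 := (norm_sum_smul_le hQ hQsa f).trans <|
    (pi_norm_le_iff_of_nonneg zero_le_one).2 hf
  have hS : ‖S‖ ≤ 1 := (norm_sum_smul_le hQ hQsa g).trans <|
    (pi_norm_le_iff_of_nonneg zero_le_one).2 hg
  have hPS : Commute P S := .sum_right _ _ _ fun b _ ↦ (hPQ b).smul_right (g b)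
  have hMR : Commute M R := .sum_right _ _ _ fun b _ ↦ (hMQ b).smul_right (f b)
  calc
    ‖(P * M - M * P) ψ‖ ≤ (‖M‖ + ‖S‖) * ‖P ψ - R ψ‖ + (‖P‖ + ‖R‖) * ‖M ψ - S ψ‖ :=
      norm_commutator_apply_le hPS hMR (commute_sum_smul hQ f g) ψ
    _ ≤ (1 + 1) * ‖P ψ - R ψ‖ + (1 + 1) * ‖M ψ - S ψ‖ := by gcongr
    _ = 2 * (‖P ψ - R ψ‖ + ‖M ψ - S ψ‖) := by ring

theorem norm_le_one_of_mem_unitary {A : Type*} [NormedRing A] [StarRing A] [CStarRing A] {u : A}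
    (hu : u ∈ unitary A) : ‖u‖ ≤ 1 := by
  nontriviality A
  exact (CStarRing.norm_of_mem_unitary hu).le

section Ampliation

open scoped TensorProduct

variable (𝕜 m n : Type*) [RCLike 𝕜] [Fintype m] [Fintype n] [DecidableEq m] [DecidableEq n]

/-- The representation `A ↦ A ⊗ 1` of the operators of the first tensor factor on the Euclidean
space indexed by `m × n`, which stands for the tensor product of Hilbert spaces. -/
noncomputable def leftAmpliation :
    Matrix m m 𝕜 →⋆ₐ[𝕜] (EuclideanSpace 𝕜 (m × n) →L[𝕜] EuclideanSpace 𝕜 (m × n)) :=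
  ((kroneckerStarAlgEquiv m n 𝕜).trans toEuclideanCLM).toStarAlgHom.comp
    { Algebra.TensorProduct.includeLeft (S := 𝕜) with map_star' := by simp }

/-- The representation `B ↦ 1 ⊗ B` of the operators of the second tensor factor on the Euclidean
space indexed by `m × n`, which stands for the tensor product of Hilbert spaces. -/
noncomputable def rightAmpliation :
    Matrix n n 𝕜 →⋆ₐ[𝕜] (EuclideanSpace 𝕜 (m × n) →L[𝕜] EuclideanSpace 𝕜 (m × n)) :=
  ((kroneckerStarAlgEquiv m n 𝕜).trans toEuclideanCLM).toStarAlgHom.comp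
    { Algebra.TensorProduct.includeRight with map_star' := by simp }

variable {𝕜 m n}

theorem commute_leftAmpliation_rightAmpliation (A : Matrix m m 𝕜) (B : Matrix n n 𝕜) :
    Commute (leftAmpliation 𝕜 m n A) (rightAmpliation 𝕜 m n B) :=
  Commute.map (by simp [Commute, SemiconjBy] : Commute (A ⊗ₜ[𝕜] (1 : Matrix n n 𝕜)) (1 ⊗ₜ[𝕜] B))
    ((kroneckerStarAlgEquiv m n 𝕜).trans toEuclideanCLM)

theorem leftAmpliation_apply_eq_mApply (A : Matrix m m ℂ) (ψ : EuclideanSpace ℂ (m × n)) :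
    leftAmpliation ℂ m n A ψ = mApply (A ⊗ₖ (1 : Matrix n n ℂ)) ψ := rfl

theorem rightAmpliation_apply_eq_mApply (B : Matrix n n ℂ) (ψ : EuclideanSpace ℂ (m × n)) :
    rightAmpliation ℂ m n B ψ = mApply ((1 : Matrix m m ℂ) ⊗ₖ B) ψ := rfl

open scoped Matrix.Norms.L2Operator in
theorem norm_leftAmpliation_le (A : Matrix m m ℂ) : ‖leftAmpliation ℂ m n A‖ ≤ ‖A‖ :=
  NonUnitalStarAlgHom.norm_apply_le _ A

open scoped Matrix.Norms.L2Operator in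
theorem stmt_19_general {κ : Type*} [Fintype κ] {P M : Matrix m m ℂ}
    (hP : ‖P‖ ≤ 1) (hM : ‖M‖ ≤ 1) {Q : κ → Matrix n n ℂ} (hQ : OrthogonalIdempotents Q)
    (hQsa : ∀ b, (Q b).IsHermitian) {f g : κ → ℂ} (hf : ∀ b, ‖f b‖ ≤ 1) (hg : ∀ b, ‖g b‖ ≤ 1)
    (ψ : EuclideanSpace ℂ (m × n)) :
    ‖mApply ((P * M - M * P) ⊗ₖ (1 : Matrix n n ℂ)) ψ‖ ≤
      2 * (‖mApply (P ⊗ₖ (1 : Matrix n n ℂ)) ψ -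
            mApply ((1 : Matrix m m ℂ) ⊗ₖ ∑ b, f b • Q b) ψ‖ +
          ‖mApply (M ⊗ₖ (1 : Matrix n n ℂ)) ψ -
            mApply ((1 : Matrix m m ℂ) ⊗ₖ ∑ b, g b • Q b) ψ‖) := by
  have hP' : ‖leftAmpliation ℂ m n P‖ ≤ 1 := (norm_leftAmpliation_le P).trans hP
  have hM' : ‖leftAmpliation ℂ m n M‖ ≤ 1 := (norm_leftAmpliation_le M).trans hM
  have hQ' : OrthogonalIdempotents fun b ↦ rightAmpliation ℂ m n (Q b) :=
    hQ.map (RingHomClass.toRingHom (rightAmpliation ℂ m n))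
  simp only [← leftAmpliation_apply_eq_mApply, ← rightAmpliation_apply_eq_mApply, map_sub, map_mul,
    map_sum, map_smul]
  exact norm_commutator_apply_le_of_measurement hP' hM' hQ'
    (fun b ↦ (hQsa b).isSelfAdjoint.map _)
    (fun _ ↦ commute_leftAmpliation_rightAmpliation P _)
    (fun _ ↦ commute_leftAmpliation_rightAmpliation M _) hf hg ψ

end Ampliation

/-- Approximate commutation from a joint measurement.
`P` is an orthogonal projection on `H_A = ℂ^{nA}`, `M` a binary observable on `H_A`, and
`Q b₁ b₂` (for `b₁ ∈ {0,1,2}`, `b₂ ∈ {0,1}`) a projective measurement on `H_B = ℂ^{nB}`. -/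
theorem stmt_19 (nA nB : ℕ) (ψ : EuclideanSpace ℂ (Fin nA × Fin nB)) (hψ : ‖ψ‖ = 1)
    (δ : ℝ) (hδ : 0 ≤ δ)
    (P : Matrix (Fin nA) (Fin nA) ℂ) (hPh : P.IsHermitian) (hPsq : P * P = P)
    (M : Matrix (Fin nA) (Fin nA) ℂ) (hMh : M.IsHermitian) (hMsq : M * M = 1)
    (Q : Fin 3 → Fin 2 → Matrix (Fin nB) (Fin nB) ℂ)
    (hQh : ∀ b₁ b₂, (Q b₁ b₂).IsHermitian)
    (hQsq : ∀ b₁ b₂, Q b₁ b₂ * Q b₁ b₂ = Q b₁ b₂)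
    (hQorth : ∀ b₁ b₂ b₁' b₂', (b₁, b₂) ≠ (b₁', b₂') → Q b₁ b₂ * Q b₁' b₂' = 0)
    (hQsum : ∑ b₁ : Fin 3, ∑ b₂ : Fin 2, Q b₁ b₂ = 1)
    (h1 : ‖mApply (P ⊗ₖ (1 : Matrix (Fin nB) (Fin nB) ℂ)) ψ -
        mApply ((1 : Matrix (Fin nA) (Fin nA) ℂ) ⊗ₖ (Q 0 0 + Q 0 1)) ψ‖ ≤ δ)
    (h2 : ‖mApply (M ⊗ₖ (1 : Matrix (Fin nB) (Fin nB) ℂ)) ψ -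
        mApply ((1 : Matrix (Fin nA) (Fin nA) ℂ) ⊗ₖ
          (∑ b₁ : Fin 3, ∑ b₂ : Fin 2, ((-1 : ℂ) ^ (b₂ : ℕ)) • Q b₁ b₂)) ψ‖ ≤ δ) :
    ‖mApply ((P * M - M * P) ⊗ₖ (1 : Matrix (Fin nB) (Fin nB) ℂ)) ψ‖ ≤ 4 * δ := by
  have hMu : M ∈ unitary _ := by
    rw [Unitary.mem_iff, hMh.isSelfAdjoint.star_eq]
    exact ⟨hMsq, hMsq⟩
  have hQ : OrthogonalIdempotents fun b : Fin 3 × Fin 2 ↦ Q b.1 b.2 :=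
    ⟨fun b ↦ hQsq b.1 b.2, fun _ _ h ↦ hQorth _ _ _ _ h⟩
  open scoped Matrix.Norms.L2Operator in
  have h := stmt_19_general (f := fun b ↦ if b.1 = 0 then 1 else 0)
    (g := fun b ↦ (-1) ^ (b.2 : ℕ)) (IsStarProjection.norm_le P ⟨hPsq, hPh⟩)
    (norm_le_one_of_mem_unitary hMu) hQ (fun b ↦ hQh b.1 b.2)
    (fun _ ↦ by split_ifs <;> simp) (fun _ ↦ by simp) ψ
  have hR : ∑ b : Fin 3 × Fin 2, (if b.1 = 0 then (1 : ℂ) else 0) • Q b.1 b.2 = Q 0 0 + Q 0 1 := by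
    simp [Fintype.sum_prod_type]
  rw [hR, Fintype.sum_prod_type] at h
  linarith
end
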